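/- Gate-elimination inductive step: for every n ≥ 2 and every DeMorgan circuit C computing XOR_n or ¬XOR_n, there exist an index i ∈ {1,…,n}, a bit b ∈ {0,1}, and a DeMorgan circuit C' on the remaining n − 1 variables computing the restricted function (XOR_n with x_i fixed to b, which is XOR_{n−1} or ¬XOR_{n−1} of the remaining variables) such that size(C') ≤ size(C) − 3. Consequently CC(XOR_n) ≥ min(CC(XOR_{n−1}), CC(¬XOR_{n−1})) + 3 for all n ≥ 2. -/

import Mathlib

/-- A node (gate) of a DeMorgan circuit on `n` inputs: an input variable, a constant,
a negation of an earlier node, or a binary ∧/∨ of two earlier (ordered) nodes.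
Nodes are referenced by their position in the gate list. -/
inductive Gate (n : ℕ) : Type
  | inp : Fin n → Gate n
  | const : Bool → Gate n
  | not : ℕ → Gate n
  | and : ℕ → ℕ → Gate n
  | or : ℕ → ℕ → Gate n
deriving DecidableEq

/-- The (indices of the) nodes a gate reads from. -/
def Gate.refs {n : ℕ} : Gate n → List ℕ
  | .inp _ => []
  | .const _ => []
  | .not a => [a]
  | .and a b => [a, b]
  | .or a b => [a, b]

/-- A DeMorgan circuit on `n` inputs: a finite DAG of gates, presented as a list in
topological order (every gate only reads strictly earlier gates), with a designated
output node. -/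
structure Circuit (n : ℕ) : Type where
  gates : List (Gate n)
  output : Fin gates.length
  wf : ∀ (i : ℕ) (g : Gate n), gates[i]? = some g → ∀ r ∈ g.refs, r < i

/-- Value of a single gate, given the values `acc` of all earlier gates. -/
def Gate.val {n : ℕ} (x : Fin n → Bool) (acc : List Bool) : Gate n → Bool
  | .inp i => x i
  | .const b => b
  | .not a => !(acc.getD a false)
  | .and a b => acc.getD a false && acc.getD b false
  | .or a b => acc.getD a false || acc.getD b false

/-- The list of values of all gates of the circuit, in topological order. -/
def Circuit.evalList {n : ℕ} (C : Circuit n) (x : Fin n → Bool) : List Bool :=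
  C.gates.foldl (fun acc g => acc ++ [g.val x acc]) []

/-- The Boolean value computed by the circuit: the value of its output node. -/
def Circuit.eval {n : ℕ} (C : Circuit n) (x : Fin n → Bool) : Bool :=
  (C.evalList x).getD C.output false

/-- A gate is costly when it is a binary (∧/∨) gate; ¬ gates and constants are free. -/
def Gate.costly {n : ℕ} : Gate n → Bool
  | .and _ _ => true
  | .or _ _ => true
  | _ => false

/-- The size of a circuit: its number of binary (∧/∨) gates. -/
def Circuit.size {n : ℕ} (C : Circuit n) : ℕ := (C.gates.filter Gate.costly).length

/-- `C` computes the Boolean function `f`. -/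
def Circuit.Computes {n : ℕ} (C : Circuit n) (f : (Fin n → Bool) → Bool) : Prop :=
  ∀ x, C.eval x = f x

/-- The DeMorgan circuit complexity of `f`: the minimum number of binary gates of a
DeMorgan circuit computing `f`. -/
noncomputable def CC (n : ℕ) (f : (Fin n → Bool) → Bool) : ℕ :=
  sInf {s | ∃ C : Circuit n, C.Computes f ∧ C.size = s}

/-- The parity function `XOR_n(x) = (x_1 + ⋯ + x_n) mod 2`. -/
def XORf (n : ℕ) (x : Fin n → Bool) : Bool :=
  decide ((∑ i : Fin n, (if x i then 1 else 0)) % 2 = 1)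

namespace GE

/-- list evaluation -/
def ev {n : ℕ} (L : List (Gate n)) (x : Fin n → Bool) : List Bool :=
  L.foldl (fun acc g => acc ++ [g.val x acc]) []

def Wf {n : ℕ} (L : List (Gate n)) : Prop :=
  ∀ (i : ℕ) (g : Gate n), L[i]? = some g → ∀ r ∈ g.refs, r < i

lemma ev_snoc {n : ℕ} (L : List (Gate n)) (g : Gate n) (x : Fin n → Bool) :
    ev (L ++ [g]) x = ev L x ++ [g.val x (ev L x)] := by
  simp [ev, List.foldl_append]

lemma ev_length {n : ℕ} (L : List (Gate n)) (x : Fin n → Bool) : (ev L x).length = L.length := by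
  induction L using List.reverseRecOn with
  | nil => simp [ev]
  | append_singleton L g ih => rw [ev_snoc]; simp [ih]

lemma val_congr {n : ℕ} (g : Gate n) (x : Fin n → Bool) (A B : List Bool)
    (h : ∀ r ∈ g.refs, A.getD r false = B.getD r false) : g.val x A = g.val x B := by
  cases g <;> simp_all [Gate.val, Gate.refs]

lemma getD_snoc_lt (A : List Bool) (b : Bool) (v : ℕ) (h : v < A.length) :
    (A ++ [b]).getD v false = A.getD v false := by
  simp [List.getD_eq_getElem?_getD, List.getElem?_append_left h]

lemma getD_snoc_eq (A : List Bool) (b : Bool) (v : ℕ) (h : v = A.length) :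
    (A ++ [b]).getD v false = b := by
  subst h; simp [List.getD_eq_getElem?_getD]

lemma Wf.front {n : ℕ} {L : List (Gate n)} {g : Gate n} (h : Wf (L ++ [g])) : Wf L := by
  intro i g' hg
  apply h i g'
  have hi : i < L.length := by
    by_contra hc
    rw [List.getElem?_eq_none (by omega)] at hg
    cases hg
  rw [List.getElem?_append_left hi, hg]

lemma Wf.snoc {n : ℕ} {L : List (Gate n)} {g : Gate n} (h : Wf L)
    (hg : ∀ r ∈ g.refs, r < L.length) : Wf (L ++ [g]) := by
  intro i g' hi
  rcases lt_trichotomy i L.length with hl | hl | hl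
  · rw [List.getElem?_append_left hl] at hi
    exact h i g' hi
  · subst hl
    simp at hi
    subst hi; exact hg
  · rw [List.getElem?_eq_none (by simp; omega)] at hi
    cases hi

lemma ev_getD {n : ℕ} (L : List (Gate n)) (x : Fin n → Bool) (hw : Wf L) :
    ∀ (v : ℕ) (g : Gate n), L[v]? = some g → (ev L x).getD v false = g.val x (ev L x) := by
  induction L using List.reverseRecOn with
  | nil => intro v g h; simp at h
  | append_singleton L g0 ih =>
    intro v g h
    have hr := hw v g h
    have hlen := ev_length L x
    rw [ev_snoc]
    have hv : v < L.length + 1 := by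
      by_contra hc
      rw [List.getElem?_eq_none (by simp; omega)] at h
      cases h
    have hc : g.val x (ev L x ++ [g0.val x (ev L x)]) = g.val x (ev L x) := by
      apply val_congr
      intro r hrr
      have := hr r hrr
      exact getD_snoc_lt _ _ _ (by omega)
    rw [hc]
    by_cases hl : v < L.length
    · rw [getD_snoc_lt _ _ _ (by omega)]
      rw [List.getElem?_append_left hl] at h
      exact ih hw.front v g h
    · have hv' : v = L.length := by omega
      rw [getD_snoc_eq _ _ _ (by omega)]
      subst hv'
      simp at h
      rw [h]

/-! ### Semantic straight-line programs -/

def Free {n : ℕ} (F : ℕ → (Fin n → Bool) → Bool) (t : ℕ) : Prop :=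
  (∃ b : Bool, ∀ x, F t x = b) ∨ (∃ (j : Fin n) (b : Bool), ∀ x, F t x = xor (x j) b) ∨
  (∃ q < t, ∃ b : Bool, ∀ x, F t x = xor (F q x) b)

def binop (c u v : Bool) : Bool := xor c (xor c u && xor c v)

def Bin {n : ℕ} (F : ℕ → (Fin n → Bool) → Bool) (t : ℕ) : Prop :=
  ∃ p < t, ∃ q < t, ∃ c : Bool, ∀ x, F t x = binop c (F p x) (F q x)

def Valid {n : ℕ} (F : ℕ → (Fin n → Bool) → Bool) (N : ℕ) (T : Finset ℕ) : Prop :=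
  ∀ t < N, Free F t ∨ (t ∈ T ∧ Bin F t)

lemma exists_T {n : ℕ} (L : List (Gate n)) :
    ∃ T : Finset ℕ, T.card ≤ (L.filter Gate.costly).length ∧
      ∀ t g, L[t]? = some g → g.costly = true → t ∈ T := by
  induction L using List.reverseRecOn with
  | nil => exact ⟨∅, by simp, by simp⟩
  | append_singleton L g0 ih =>
    obtain ⟨T, hT, hm⟩ := ih
    refine ⟨if g0.costly then insert L.length T else T, ?_, ?_⟩
    · by_cases hc : g0.costly = true
      · have := Finset.card_insert_le L.length T
        simp [hc, List.filter_append]; omega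
      · simp [hc, List.filter_append]; omega
    · intro t g h hg
      rcases lt_trichotomy t L.length with hl | hl | hl
      · rw [List.getElem?_append_left hl] at h
        have := hm t g h hg
        split_ifs
        · exact Finset.mem_insert_of_mem this
        · exact this
      · subst hl
        simp at h
        subst h
        simp [hg]
      · rw [List.getElem?_eq_none (by simp; omega)] at h
        cases h

lemma extract {n : ℕ} (C : Circuit n) :
    ∃ (F : ℕ → (Fin n → Bool) → Bool) (N o : ℕ) (T : Finset ℕ), Valid F N T ∧ o < N ∧
      (∀ x, F o x = C.eval x) ∧ T.card ≤ C.size := by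
  obtain ⟨T, hT, hm⟩ := exists_T C.gates
  refine ⟨fun v x => (ev C.gates x).getD v false, C.gates.length, C.output, T, ?_, C.output.2,
    fun x => rfl, hT⟩
  intro t ht
  have hg : C.gates[t]? = some C.gates[t] := List.getElem?_eq_getElem ht
  generalize C.gates[t] = g at hg
  have hwf := C.wf t g hg
  have he := fun x => ev_getD C.gates x C.wf t g hg
  have hmt := hm t g hg
  cases g with
  | inp i => exact Or.inl (Or.inr (Or.inl ⟨i, false, fun x => by simp only [he]; simp [Gate.val]⟩))
  | const b => exact Or.inl (Or.inl ⟨b, fun x => by simp only [he]; simp [Gate.val]⟩)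
  | not a =>
    exact Or.inl (Or.inr (Or.inr ⟨a, hwf a (by simp [Gate.refs]), true,
      fun x => by simp only [he]; simp [Gate.val]⟩))
  | and a b =>
    exact Or.inr ⟨hmt rfl, a, hwf a (by simp [Gate.refs]), b, hwf b (by simp [Gate.refs]), false,
      fun x => by simp only [he]; simp [Gate.val, binop]⟩
  | or a b =>
    exact Or.inr ⟨hmt rfl, a, hwf a (by simp [Gate.refs]), b, hwf b (by simp [Gate.refs]), true,
      fun x => by
        simp only [he, Gate.val, binop]
        cases (ev C.gates x).getD a false <;> cases (ev C.gates x).getD b false <;> rfl⟩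

lemma ext2 {n : ℕ} (F : ℕ → (Fin n → Bool) → Bool) (N : ℕ) (L : List (Gate n)) (g1 g2 : Gate n)
    (hl : L.length = 2 * N) (hw : Wf L) (h : ∀ v < N, ∀ x, (ev L x).getD (2 * v + 1) false = F v x)
    (h1 : ∀ r ∈ g1.refs, r < 2 * N) (h2 : ∀ r ∈ g2.refs, r < 2 * N + 1)
    (hv : ∀ x A, (∀ v < N, A.getD (2 * v + 1) false = F v x) →
      A.getD (2 * N) false = g1.val x (ev L x) → g2.val x A = F N x) :
    (L ++ [g1] ++ [g2]).length = 2 * (N + 1) ∧ Wf (L ++ [g1] ++ [g2]) ∧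
    ∀ v < N + 1, ∀ x, (ev (L ++ [g1] ++ [g2]) x).getD (2 * v + 1) false = F v x := by
  refine ⟨by simp; omega, (hw.snoc (by rw [hl]; exact h1)).snoc (by
    rw [List.length_append, hl]; exact h2), ?_⟩
  intro v hvN x
  have hlen := ev_length L x
  have hA : ∀ v < N, (ev (L ++ [g1]) x).getD (2 * v + 1) false = F v x := by
    intro v hv'
    rw [ev_snoc, getD_snoc_lt _ _ _ (by omega)]
    exact h v hv' x
  have hlen' := ev_length (L ++ [g1]) x
  simp only [List.length_append, List.length_singleton] at hlen'
  rw [ev_snoc]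
  by_cases hvn : v < N
  · rw [getD_snoc_lt _ _ _ (by omega)]
    exact hA v hvn
  · have : v = N := by omega
    subst this
    rw [getD_snoc_eq _ _ _ (by omega)]
    apply hv x _ hA
    rw [ev_snoc, getD_snoc_eq _ _ _ (by omega)]

lemma realize_list {n : ℕ} (F : ℕ → (Fin n → Bool) → Bool) (T : Finset ℕ) :
    ∀ N, Valid F N T → ∃ L : List (Gate n), L.length = 2 * N ∧ Wf L ∧
      (∀ v < N, ∀ x, (ev L x).getD (2 * v + 1) false = F v x) ∧
      (L.filter Gate.costly).length ≤ (T.filter (· < N)).card := by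
  intro N
  induction N with
  | zero => intro _; exact ⟨[], by simp, by intro i g h; simp at h, by simp, by simp⟩
  | succ N ih =>
    intro hV
    obtain ⟨L, hl, hw, hv, hc⟩ := ih (fun t ht => hV t (by omega))
    have hmono : (T.filter (· < N)).card ≤ (T.filter (· < N + 1)).card := by
      apply Finset.card_le_card
      intro t; simp only [Finset.mem_filter]; rintro ⟨h1, h2⟩; exact ⟨h1, by omega⟩
    have key : ∀ g1 g2 : Gate n, g1.costly = false → g2.costly = false →
        (∀ r ∈ g1.refs, r < 2 * N) → (∀ r ∈ g2.refs, r < 2 * N + 1) →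
        (∀ x A, (∀ v < N, A.getD (2 * v + 1) false = F v x) →
          A.getD (2 * N) false = g1.val x (ev L x) → g2.val x A = F N x) →
        ∃ L : List (Gate n), L.length = 2 * (N + 1) ∧ Wf L ∧
        (∀ v < N + 1, ∀ x, (ev L x).getD (2 * v + 1) false = F v x) ∧
        (L.filter Gate.costly).length ≤ (T.filter (· < N + 1)).card := by
      intro g1 g2 c1 c2 h1 h2 h3
      obtain ⟨a1, a2, a3⟩ := ext2 F N L g1 g2 hl hw hv h1 h2 h3
      refine ⟨_, a1, a2, a3, ?_⟩
      simp only [List.filter_append, List.length_append]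
      have e1 : ([g1].filter (Gate.costly (n := n))).length = 0 := by simp [c1]
      have e2 : ([g2].filter (Gate.costly (n := n))).length = 0 := by simp [c2]
      omega
    rcases hV N (by omega) with (⟨b, hb⟩ | ⟨j, b, hb⟩ | ⟨q, hq, b, hb⟩) | ⟨hT, p, hp, q, hq, c, hb⟩
    · apply key (.const b) (.const b) rfl rfl <;> simp [Gate.refs, Gate.val, hb]
    · cases b
      · apply key (.inp j) (.inp j) rfl rfl <;> simp [Gate.refs, Gate.val, hb]
      · apply key (.inp j) (.not (2 * N)) rfl rfl
        · simp [Gate.refs]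
        · simp [Gate.refs]
        · intro x A _ h
          simp only [Gate.val] at h ⊢
          rw [h, hb]; simp
    · cases b
      · apply key (.not (2 * q + 1)) (.not (2 * N)) rfl rfl
        · simp [Gate.refs]; omega
        · simp [Gate.refs]
        · intro x A _ h
          simp only [Gate.val] at h ⊢
          rw [h, hb, hv q hq]; simp
      · apply key (.const false) (.not (2 * q + 1)) rfl rfl
        · simp [Gate.refs]
        · simp [Gate.refs]; omega
        · intro x A h _
          simp only [Gate.val]
          rw [h q hq, hb]; simp
    · have hcard : (T.filter (· < N)).card + 1 ≤ (T.filter (· < N + 1)).card := by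
        rw [← Finset.card_insert_of_notMem (a := N) (by simp)]
        apply Finset.card_le_card
        intro t; simp only [Finset.mem_filter, Finset.mem_insert]
        rintro (h | ⟨h1, h2⟩)
        · subst h; exact ⟨hT, by omega⟩
        · exact ⟨h1, by omega⟩
      have h2' : ∀ r ∈ [2 * p + 1, 2 * q + 1], r < 2 * N + 1 := by simp; omega
      obtain ⟨a1, a2, a3⟩ := ext2 F N L (.const false)
        (if c then .or (2 * p + 1) (2 * q + 1) else .and (2 * p + 1) (2 * q + 1)) hl hw hv
        (by simp [Gate.refs]) (by cases c <;> exact h2')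
        (by
          intro x A h _
          cases c
          · simp only [Gate.val, Bool.false_eq_true, if_false]
            rw [h p hp, h q hq, hb]; simp [binop]
          · simp only [Gate.val, if_true]
            rw [h p hp, h q hq, hb]
            cases F p x <;> cases F q x <;> rfl)
      refine ⟨_, a1, a2, a3, ?_⟩
      simp only [List.filter_append, List.length_append]
      have e1 : ([Gate.const false].filter (Gate.costly (n := n))).length = 0 := rfl
      have e2 : ∀ g : Gate n, ([g].filter (Gate.costly (n := n))).length ≤ 1 := by
        intro g; exact List.length_filter_le _ _
      have := e2 (if c then .or (2 * p + 1) (2 * q + 1) else .and (2 * p + 1) (2 * q + 1))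
      omega

lemma realize {n : ℕ} (F : ℕ → (Fin n → Bool) → Bool) (T : Finset ℕ) (N o : ℕ)
    (hV : Valid F N T) (ho : o < N) :
    ∃ C : Circuit n, (∀ x, C.eval x = F o x) ∧ C.size ≤ T.card := by
  obtain ⟨L, hl, hw, hv, hc⟩ := realize_list F T N hV
  refine ⟨⟨L, ⟨2 * o + 1, by omega⟩, hw⟩, fun x => hv o ho x, ?_⟩
  exact hc.trans (Finset.card_le_card (Finset.filter_subset _ _))

/-! ### Parity facts -/

lemma XORf_succ {m : ℕ} (i : Fin (m + 1)) (x : Fin (m + 1) → Bool) :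
    XORf (m + 1) x = xor (x i) (XORf m (fun k => x (i.succAbove k))) := by
  unfold XORf
  rw [Fin.sum_univ_succAbove _ i]
  generalize (∑ k : Fin m, if x (i.succAbove k) = true then 1 else 0) = s
  cases x i
  · simp
  · rcases Nat.mod_two_eq_zero_or_one s with h | h
    · have : (1 + s) % 2 = 1 := by omega
      simp [h, this]
    · have : (1 + s) % 2 = 0 := by omega
      simp [h, this]

def Sens {n : ℕ} (f : (Fin n → Bool) → Bool) : Prop :=
  ∀ x i, f (Function.update x i (!x i)) = !f x

lemma sens_xor (m : ℕ) : Sens (XORf (m + 1)) := by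
  intro x i
  rw [XORf_succ i, XORf_succ i x]
  simp [Fin.succAbove_ne]

/-! ### The core argument -/

def Lit {n : ℕ} (i : Fin n) (g : (Fin n → Bool) → Bool) : Prop :=
  ∃ b : Bool, ∀ x, g x = xor (x i) b

def Cst {n : ℕ} (g : (Fin n → Bool) → Bool) : Prop := ∃ b : Bool, ∀ x, g x = b

def Triv {n : ℕ} (g : (Fin n → Bool) → Bool) : Prop := Cst g ∨ ∃ i, Lit i g

lemma triv_binop_same {n : ℕ} (i : Fin n) (c a b : Bool) :
    Triv (fun x : Fin n → Bool => binop c (xor (x i) a) (xor (x i) b)) := by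
  cases a <;> cases b
  · exact Or.inr ⟨i, false, fun x => by
      beta_reduce; generalize x i = z; cases c <;> cases z <;> rfl⟩
  · exact Or.inl ⟨c, fun x => by
      beta_reduce; generalize x i = z; cases c <;> cases z <;> rfl⟩
  · exact Or.inl ⟨c, fun x => by
      beta_reduce; generalize x i = z; cases c <;> cases z <;> rfl⟩
  · exact Or.inr ⟨i, true, fun x => by
      beta_reduce; generalize x i = z; cases c <;> cases z <;> rfl⟩

lemma binop_comm (c u v : Bool) : binop c u v = binop c v u := by
  cases c <;> cases u <;> cases v <;> rfl

lemma binop_const {k : Bool} (c v : Bool) : binop c k v = if k = c then c else v := by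
  cases c <;> cases k <;> cases v <;> rfl

/-- first nontrivial gate -/
lemma first_gate {n : ℕ} (F : ℕ → (Fin n → Bool) → Bool) (N o : ℕ) (T : Finset ℕ)
    (hV : Valid F N T) (ho : o < N) (hnt : ¬ Triv (F o)) :
    ∃ G < N, G ∈ T ∧ ¬ Triv (F G) ∧ ∃ (i j : Fin n) (a b c : Bool), i ≠ j ∧
      ∀ x, F G x = binop c (xor (x i) a) (xor (x j) b) := by
  classical
  have hex : ∃ G, G < N ∧ ¬ Triv (F G) := ⟨o, ho, hnt⟩
  obtain ⟨hGN, hG⟩ := Nat.find_spec hex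
  have hmin : ∀ t < Nat.find hex, Triv (F t) := by
    intro t ht
    by_contra h
    exact Nat.find_min hex ht ⟨by omega, h⟩
  generalize Nat.find hex = G at *
  refine ⟨G, hGN, ?_⟩
  rcases hV G hGN with (⟨b, hb⟩ | ⟨j, b, hb⟩ | ⟨q, hq, b, hb⟩) | ⟨hT, p, hp, q, hq, c, hb⟩
  · exact absurd (Or.inl ⟨b, hb⟩) hG
  · exact absurd (Or.inr ⟨j, b, hb⟩) hG
  · exfalso
    apply hG
    rcases hmin q hq with ⟨d, hd⟩ | ⟨j, d, hd⟩
    · exact Or.inl ⟨xor d b, fun x => by rw [hb, hd]⟩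
    · exact Or.inr ⟨j, xor d b, fun x => by rw [hb, hd, Bool.xor_assoc]⟩
  · refine ⟨hT, hG, ?_⟩
    have side : ∀ p q : ℕ, (∀ x, F G x = binop c (F p x) (F q x)) → Triv (F q) → ¬ Cst (F p) := by
      rintro p q hb hq ⟨d, hd⟩
      apply hG
      by_cases hdc : d = c
      · exact Or.inl ⟨c, fun x => by rw [hb, hd, binop_const, if_pos hdc]⟩
      · have : F G = F q := by funext x; rw [hb, hd, binop_const, if_neg hdc]
        rw [this]; exact hq
    have np := side p q hb (hmin q hq)
    have nq := side q p (fun x => by rw [hb, binop_comm]) (hmin p hp)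
    obtain ⟨i, a, ha⟩ := (hmin p hp).resolve_left np
    obtain ⟨j, b, hb'⟩ := (hmin q hq).resolve_left nq
    have hf : ∀ x, F G x = binop c (xor (x i) a) (xor (x j) b) := fun x => by rw [hb, ha, hb']
    refine ⟨i, j, a, b, c, ?_, hf⟩
    rintro rfl
    apply hG
    have : F G = fun x => binop c (xor (x i) a) (xor (x i) b) := funext hf
    rw [this]; exact triv_binop_same i c a b

lemma sens_not_triv {n : ℕ} (hn : 2 ≤ n) (f : (Fin n → Bool) → Bool) (hf : Sens f) :
    ¬ Triv f := by
  rintro (⟨b, hb⟩ | ⟨i, b, hb⟩)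
  · have := hf (fun _ => false) ⟨0, by omega⟩
    rw [hb, hb] at this
    cases b <;> simp at this
  · have : Nontrivial (Fin n) := Fin.nontrivial_iff_two_le.mpr hn
    obtain ⟨j, hj⟩ := exists_ne i
    have := hf (fun _ => false) j
    rw [hb, hb, Function.update_of_ne hj.symm] at this
    cases b <;> simp at this

/-- the literal variable feeds a second gate -/
lemma second_gate {n : ℕ} (F : ℕ → (Fin n → Bool) → Bool) (N o G : ℕ) (T : Finset ℕ)
    (hV : Valid F N T) (ho : o < N) (hS : Sens (F o)) (hnt : ¬ Triv (F o)) (i j : Fin n)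
    (a b c : Bool) (hij : i ≠ j) (hG : ∀ x, F G x = binop c (xor (x i) a) (xor (x j) b)) :
    ∃ h ∈ T, h ≠ G ∧ ∃ p < h, ∃ q < h, ∃ c : Bool, (∀ x, F h x = binop c (F p x) (F q x)) ∧
      Lit i (F p) := by
  by_contra hcon
  have key : ∀ v < N, Lit i (F v) ∨
      ∀ x, x j = xor b c → ∀ z, F v (Function.update x i z) = F v x := by
    intro v
    induction v using Nat.strong_induction_on with
    | _ v ih =>
    intro hv
    by_cases hvG : v = G
    · right
      intro x hx z
      subst hvG
      rw [hG, hG, Function.update_of_ne hij.symm, hx]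
      cases c <;> cases b <;> simp [binop]
    rcases hV v hv with (⟨b, hb⟩ | ⟨k, b, hb⟩ | ⟨q, hq, d, hb⟩) | ⟨hT, p, hp, q, hq, d, hb⟩
    · right; intro x _ z; rw [hb, hb]
    · by_cases hk : k = i
      · subst hk; exact Or.inl ⟨b, hb⟩
      · right; intro x _ z; rw [hb, hb, Function.update_of_ne hk]
    · rcases ih q hq (by omega) with ⟨e, he⟩ | h
      · exact Or.inl ⟨xor e d, fun x => by rw [hb, he, Bool.xor_assoc]⟩
      · right; intro x hx z; rw [hb, hb, h x hx z]
    · right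
      intro x hx z
      have hp' := (ih p hp (by omega)).resolve_left (fun hl =>
        hcon ⟨v, hT, hvG, p, hp, q, hq, d, hb, hl⟩)
      have hq' := (ih q hq (by omega)).resolve_left (fun hl =>
        hcon ⟨v, hT, hvG, q, hq, p, hp, d, fun x => by rw [hb, binop_comm], hl⟩)
      rw [hb, hb, hp' x hx z, hq' x hx z]
  rcases key o ho with h | h
  · exact hnt (Or.inr ⟨i, h⟩)
  · have h1 := h (fun _ => xor b c) rfl (!(xor b c))
    have h2 := hS (fun _ => xor b c) i
    rw [h1] at h2
    cases hh : F o (fun _ => xor b c) <;> simp [hh] at h2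

lemma core {m : ℕ} (hm : 1 ≤ m) (f : (Fin (m + 1) → Bool) → Bool) (hf : Sens f) :
    ∀ (s : ℕ) (F : ℕ → (Fin (m + 1) → Bool) → Bool) (N o : ℕ) (T : Finset ℕ), T.card = s →
      Valid F N T → o < N → F o = f →
      ∃ (i : Fin (m + 1)) (b : Bool) (F' : ℕ → (Fin m → Bool) → Bool) (T' : Finset ℕ) (N' o' : ℕ),
        Valid F' N' T' ∧ o' < N' ∧ (∀ y, F' o' y = f (i.insertNth b y)) ∧ T'.card + 3 ≤ s := by
  classical
  intro s
  induction s using Nat.strong_induction_on with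
  | _ s ih =>
  intro F N o T hs hV ho hFo
  have hnt : ¬ Triv (F o) := by rw [hFo]; exact sens_not_triv (by omega) f hf
  obtain ⟨G, hGN, hGT, hGnt, i, j, a, b, c, hij, hG⟩ := first_gate F N o T hV ho hnt
  obtain ⟨h, hhT, hhG, p0, hp0, q0, hq0, c0, hh, hlit⟩ :=
    second_gate F N o G T hV ho (by rw [hFo]; exact hf) hnt i j a b c hij hG
  set R : ℕ → (Fin m → Bool) → Bool := fun v y => F v (i.insertNth (xor a c) y) with hR
  have litR : ∀ v, Lit i (F v) → Cst (R v) := by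
    rintro v ⟨d, hd⟩
    exact ⟨xor (xor a c) d, fun y => by simp [hR, hd]⟩
  have cstbin : ∀ t p q d, (∀ x, F t x = binop d (F p x) (F q x)) → Cst (R p) → q < t →
      Free R t := by
    rintro t p q d hb ⟨e, he⟩ hq
    by_cases hed : e = d
    · exact Or.inl ⟨d, fun y => by
        have := he y
        simp only [hR] at this ⊢
        rw [hb, this, binop_const, if_pos hed]⟩
    · exact Or.inr (Or.inr ⟨q, hq, false, fun y => by
        have := he y
        simp only [hR] at this ⊢
        rw [hb, this, binop_const, if_neg hed, Bool.xor_false]⟩)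
  have hGR : Cst (R G) := ⟨c, fun y => by
    simp only [hR]
    rw [hG]
    simp only [Fin.insertNth_apply_same]
    cases a <;> cases c <;> simp [binop]⟩
  have hfreeh : Free R h := cstbin h p0 q0 c0 hh (litR _ hlit) hq0
  have hVR : Valid R N (T.filter (fun t => ¬ Free R t)) := by
    intro t ht
    by_cases hfr : Free R t
    · exact Or.inl hfr
    right
    rcases hV t ht with (⟨b, hb⟩ | ⟨k, b, hb⟩ | ⟨q, hq, d, hb⟩) | ⟨hT, p, hp, q, hq, d, hb⟩
    · exact absurd (Or.inl ⟨b, fun y => hb _⟩) hfr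
    · refine absurd ?_ hfr
      by_cases hk : k = i
      · subst hk
        exact Or.inl (litR t ⟨b, hb⟩)
      · obtain ⟨k', rfl⟩ := Fin.exists_succAbove_eq hk
        exact Or.inr (Or.inl ⟨k', b, fun y => by simp [hR, hb]⟩)
    · exact absurd (Or.inr (Or.inr ⟨q, hq, d, fun y => hb _⟩)) hfr
    · exact ⟨Finset.mem_filter.mpr ⟨hT, hfr⟩, p, hp, q, hq, d, fun y => hb _⟩
  by_cases hcard : (T.filter (fun t => ¬ Free R t)).card + 3 ≤ s
  · exact ⟨i, xor a c, R, _, N, o, hVR, ho, fun y => by simp only [hR, hFo], hcard⟩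
  have honly : ∀ t ∈ T, Free R t → t = G ∨ t = h := by
    intro t htT hft
    by_contra hne
    push Not at hne
    apply hcard
    have h1 := Finset.card_filter_add_card_filter_not (s := T) (fun t => Free R t)
    have h2 : ({t, G, h} : Finset ℕ).card = 3 := by
      rw [Finset.card_eq_three]; exact ⟨t, G, h, hne.1, hne.2, hhG.symm, rfl⟩
    have h3 : ({t, G, h} : Finset ℕ) ⊆ T.filter (fun t => Free R t) := by
      intro u hu
      simp only [Finset.mem_insert, Finset.mem_singleton] at hu
      rw [Finset.mem_filter]
      rcases hu with rfl | rfl | rfl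
      · exact ⟨htT, hft⟩
      · exact ⟨hGT, Or.inl hGR⟩
      · exact ⟨hhT, hfreeh⟩
    have h4 := Finset.card_le_card h3
    omega
  -- the gate `G` can be removed
  let Good : ℕ → Prop := fun v => Lit i (F v) ∨ ¬ Cst (R v)
  let F2 : ℕ → (Fin (m + 1) → Bool) → Bool := fun v => if Good v then F v else fun _ => false
  have hF2 : ∀ v, Good v → F2 v = F v := fun v hv => if_pos hv
  have hRo : ¬ Cst (R o) := by
    rintro ⟨d, hd⟩
    have h1 := hd (fun _ => false)
    have h2 := hd (Function.update (fun _ => false) ⟨0, hm⟩ true)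
    simp only [hR, hFo] at h1 h2
    have h3 := hf (i.insertNth (xor a c) (fun _ => false)) (i.succAbove ⟨0, hm⟩)
    have h4 : Function.update (i.insertNth (xor a c) (fun _ => false) : Fin (m + 1) → Bool)
        (i.succAbove ⟨0, hm⟩)
        (!(i.insertNth (xor a c) (fun _ => false) : Fin (m + 1) → Bool) (i.succAbove ⟨0, hm⟩)) =
        i.insertNth (xor a c) (Function.update (fun _ => false) ⟨0, hm⟩ true) := by
      rw [Fin.insertNth_update]
      simp
    rw [h4, h1, h2] at h3
    cases d <;> simp at h3
  have hV2 : Valid F2 N (T.erase G) := by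
    intro t ht
    by_cases hgt : Good t
    swap
    · exact Or.inl (Or.inl ⟨false, fun x => by simp only [F2, if_neg hgt]⟩)
    have e := hF2 t hgt
    have litfree : Lit i (F t) → Free F2 t := fun ⟨d, hd⟩ =>
      Or.inr (Or.inl ⟨i, d, fun x => by rw [e, hd]⟩)
    have bin : ∀ p < t, ∀ q < t, ∀ d, (∀ x, F t x = binop d (F p x) (F q x)) → Good p → Good q →
        Bin F2 t := by
      intro p hp q hq d hb gp gq
      exact ⟨p, hp, q, hq, d, fun x => by rw [e, hF2 p gp, hF2 q gq, hb]⟩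
    by_cases hth : t = h
    · subst hth
      by_cases gq : Good q0
      · exact Or.inr ⟨Finset.mem_erase.mpr ⟨hhG, hhT⟩,
          bin p0 hp0 q0 hq0 c0 hh (Or.inl hlit) gq⟩
      · left
        apply litfree
        rcases hgt with hl | hl
        · exact hl
        · exfalso
          apply hl
          have hq : Cst (R q0) := by
            by_contra hc; exact gq (Or.inr hc)
          obtain ⟨u, hu⟩ := litR p0 hlit
          obtain ⟨w, hw⟩ := hq
          refine ⟨binop c0 u w, fun y => ?_⟩
          rw [← hu y, ← hw y]; exact hh _
    rcases hV t ht with (⟨b, hb⟩ | ⟨k, b, hb⟩ | ⟨q, hq, d, hb⟩) | ⟨hT, p, hp, q, hq, d, hb⟩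
    · exact Or.inl (Or.inl ⟨b, fun x => by rw [e, hb]⟩)
    · exact Or.inl (Or.inr (Or.inl ⟨k, b, fun x => by rw [e, hb]⟩))
    · left
      have gq : Good q := by
        rcases hgt with ⟨u, hu⟩ | hl
        · left
          refine ⟨xor u d, fun x => ?_⟩
          have := hu x
          rw [hb] at this
          rw [← Bool.xor_assoc, ← this]; simp
        · right
          rintro ⟨u, hu⟩
          exact hl ⟨xor u d, fun y => by rw [← hu y]; exact hb _⟩
      exact Or.inr (Or.inr ⟨q, hq, d, fun x => by rw [e, hF2 q gq, hb]⟩)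
    · right
      by_cases htG : t = G
      · exfalso
        subst htG
        rcases hgt with hl | hl
        · exact hGnt (Or.inr ⟨i, hl⟩)
        · exact hl hGR
      · have nf : ¬ Free R t := fun hfr => (honly t hT hfr).elim htG hth
        refine ⟨Finset.mem_erase.mpr ⟨htG, hT⟩, bin p hp q hq d hb ?_ ?_⟩
        · exact Or.inr (fun hc => nf (cstbin t p q d hb hc hq))
        · exact Or.inr (fun hc => nf (cstbin t q p d (fun x => by rw [hb, binop_comm]) hc hp))
  have hlt : (T.erase G).card < s := by rw [← hs]; exact Finset.card_erase_lt_of_mem hGT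
  obtain ⟨i', b', F', T', N', o', r1, r2, r3, r4⟩ :=
    ih _ hlt F2 N o (T.erase G) rfl hV2 ho (by rw [hF2 o (Or.inr hRo), hFo])
  exact ⟨i', b', F', T', N', o', r1, r2, r3, by omega⟩

lemma step {m : ℕ} (hm : 1 ≤ m) (C : Circuit (m + 1)) (hC : Sens C.eval) :
    ∃ (i : Fin (m + 1)) (b : Bool) (C' : Circuit m),
      (∀ y : Fin m → Bool, C'.eval y = C.eval (i.insertNth b y)) ∧ C'.size + 3 ≤ C.size := by
  obtain ⟨F, N, o, T, hV, ho, hF, hT⟩ := extract C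
  obtain ⟨i, b, F', T', N', o', h1, h2, h3, h4⟩ :=
    core hm C.eval hC _ F N o T rfl hV ho (funext hF)
  obtain ⟨C', e, hs⟩ := realize F' T' N' o' h1 h2
  exact ⟨i, b, C', fun y => by rw [e, h3], by omega⟩

/-! ### XOR is computable -/

/-- parity of the first `k` bits -/
def par {n : ℕ} (x : Fin n → Bool) : ℕ → Bool
  | 0 => false
  | k + 1 => xor (par x k) (if h : k < n then x ⟨k, h⟩ else false)

lemma par_eq {n : ℕ} (x : Fin n → Bool) : par x n = XORf n x := by
  have key : ∀ k, par x k =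
      decide ((∑ j ∈ Finset.range k, if h : j < n then (if x ⟨j, h⟩ then 1 else 0) else 0) % 2 = 1) := by
    intro k
    induction k with
    | zero => simp [par]
    | succ k ih =>
      rw [par, ih, Finset.sum_range_succ]
      generalize (∑ j ∈ Finset.range k,
        if h : j < n then (if x ⟨j, h⟩ then 1 else 0) else 0) = s
      by_cases hk : k < n
      · simp only [hk, dif_pos]
        cases x ⟨k, hk⟩
        · simp
        · rcases Nat.mod_two_eq_zero_or_one s with h | h
          · have : (s + 1) % 2 = 1 := by omega
            simp [h, this]
          · have : (s + 1) % 2 = 0 := by omega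
            simp [h, this]
      · simp [hk]
  rw [key, XORf, Finset.sum_range]
  simp

/-- straight-line program for parity -/
def XF (n : ℕ) (v : ℕ) (x : Fin n → Bool) : Bool :=
  let k := v / 6
  let b := if h : k < n then x ⟨k, h⟩ else false
  if v % 6 = 0 then par x k
  else if v % 6 = 1 then b
  else if v % 6 = 2 then !(par x k)
  else if v % 6 = 3 then !b
  else if v % 6 = 4 then par x k && !b
  else !(par x k) && b

lemma xor_circuit (n : ℕ) : ∃ C : Circuit n, C.Computes (XORf n) := by
  have hV : Valid (XF n) (6 * n + 1) (Finset.range (6 * n + 1)) := by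
    intro t ht
    obtain ⟨k, r, hr, rfl⟩ : ∃ k r, r < 6 ∧ t = 6 * k + r :=
      ⟨t / 6, t % 6, Nat.mod_lt _ (by norm_num), by omega⟩
    have e : ∀ r < 6, (6 * k + r) / 6 = k ∧ (6 * k + r) % 6 = r := by intro r hr; omega
    have E0 : ∀ x, XF n (6 * k) x = par x k := by
      intro x; have := e 0 (by norm_num); simp only [Nat.add_zero] at this; simp [XF]
    have E1 : ∀ x, XF n (6 * k + 1) x = if h : k < n then x ⟨k, h⟩ else false := by
      intro x; simp only [XF, e 1 (by norm_num)]; simp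
    have E2 : ∀ x, XF n (6 * k + 2) x = !(par x k) := by
      intro x; simp only [XF, e 2 (by norm_num)]; simp
    have E3 : ∀ x, XF n (6 * k + 3) x = !(if h : k < n then x ⟨k, h⟩ else false) := by
      intro x; simp only [XF, e 3 (by norm_num)]; simp
    have E4 : ∀ x, XF n (6 * k + 4) x = (par x k && !(if h : k < n then x ⟨k, h⟩ else false)) := by
      intro x; simp only [XF, e 4 (by norm_num)]; simp
    have E5 : ∀ x, XF n (6 * k + 5) x = (!(par x k) && (if h : k < n then x ⟨k, h⟩ else false)) := by
      intro x; simp only [XF, e 5 (by norm_num)]; simp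
    have hm : 6 * k + r ∈ Finset.range (6 * n + 1) := Finset.mem_range.mpr ht
    interval_cases r
    · cases k with
      | zero => exact Or.inl (Or.inl ⟨false, fun x => by rw [Nat.add_zero, E0]; rfl⟩)
      | succ k =>
        refine Or.inr ⟨hm, 6 * k + 4, by omega, 6 * k + 5, by omega, true, fun x => ?_⟩
        have e4 : (6 * k + 4) / 6 = k ∧ (6 * k + 4) % 6 = 4 := by omega
        have e5 : (6 * k + 5) / 6 = k ∧ (6 * k + 5) % 6 = 5 := by omega
        have E4 : XF n (6 * k + 4) x =
            (par x k && !(if h : k < n then x ⟨k, h⟩ else false)) := by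
          simp only [XF, e4]; simp
        have E5 : XF n (6 * k + 5) x =
            (!(par x k) && (if h : k < n then x ⟨k, h⟩ else false)) := by
          simp only [XF, e5]; simp
        rw [Nat.add_zero, E0, E4, E5, par]
        generalize (if h : k < n then x ⟨k, h⟩ else false) = b
        cases par x k <;> cases b <;> rfl
    · left
      by_cases hk : k < n
      · exact Or.inr (Or.inl ⟨⟨k, hk⟩, false, fun x => by rw [E1]; simp [hk]⟩)
      · exact Or.inl ⟨false, fun x => by rw [E1]; simp [hk]⟩
    · exact Or.inl (Or.inr (Or.inr ⟨6 * k, by omega, true, fun x => by rw [E2, E0]; simp⟩))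
    · exact Or.inl (Or.inr (Or.inr ⟨6 * k + 1, by omega, true, fun x => by rw [E3, E1]; simp⟩))
    · refine Or.inr ⟨hm, 6 * k, by omega, 6 * k + 3, by omega, false, fun x => ?_⟩
      rw [E4, E0, E3]; simp [binop]
    · refine Or.inr ⟨hm, 6 * k + 2, by omega, 6 * k + 1, by omega, false, fun x => ?_⟩
      rw [E5, E2, E1]; simp [binop]
  obtain ⟨C, hC, _⟩ := realize _ _ _ (6 * n) hV (by omega)
  refine ⟨C, fun x => ?_⟩
  rw [hC, ← par_eq]
  simp [XF]

end GE

/-- Gate-elimination inductive step: for `n = m + 1 ≥ 2`, every DeMorgan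
circuit `C` computing `XOR_n` or `¬XOR_n` admits an index `i`, a bit `b`, and a circuit
`C'` on the remaining `m = n - 1` variables computing the restriction of the function
computed by `C` under `x_i := b` (which is `XOR_{n-1}` or `¬XOR_{n-1}`), with
`size(C') ≤ size(C) - 3`.  Consequently
`CC(XOR_n) ≥ min(CC(XOR_{n-1}), CC(¬XOR_{n-1})) + 3`. -/
theorem gate_elimination_step :
    ∀ m : ℕ, 1 ≤ m →
      (∀ C : Circuit (m + 1),
        (C.Computes (XORf (m + 1)) ∨ C.Computes (fun x => !(XORf (m + 1) x))) →
        ∃ (i : Fin (m + 1)) (b : Bool) (C' : Circuit m),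
          (∀ y : Fin m → Bool, C'.eval y = C.eval (i.insertNth b y)) ∧
          C'.size + 3 ≤ C.size) ∧
      min (CC m (XORf m)) (CC m (fun y => !(XORf m y))) + 3 ≤ CC (m + 1) (XORf (m + 1)) := by
  intro m hm
  have hstep : ∀ C : Circuit (m + 1),
      (C.Computes (XORf (m + 1)) ∨ C.Computes (fun x => !(XORf (m + 1) x))) →
      ∃ (i : Fin (m + 1)) (b : Bool) (C' : Circuit m),
        (∀ y : Fin m → Bool, C'.eval y = C.eval (i.insertNth b y)) ∧
        C'.size + 3 ≤ C.size := by
    intro C hC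
    apply GE.step hm
    intro x i
    rcases hC with h | h
    · rw [h, h]; exact GE.sens_xor m x i
    · rw [h, h]; simp only []; rw [GE.sens_xor m x i]
  refine ⟨hstep, ?_⟩
  have hne : {s | ∃ C : Circuit (m + 1), C.Computes (XORf (m + 1)) ∧ C.size = s}.Nonempty := by
    obtain ⟨C, hC⟩ := GE.xor_circuit (m + 1)
    exact ⟨_, C, hC, rfl⟩
  obtain ⟨C, hC, hs⟩ := Nat.sInf_mem hne
  obtain ⟨i, b, C', h1, h2⟩ := hstep C (Or.inl hC)
  have h3 : ∀ y, C'.eval y = xor b (XORf m y) := by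
    intro y
    rw [h1, hC, GE.XORf_succ i]
    simp
  have h4 : min (CC m (XORf m)) (CC m (fun y => !(XORf m y))) ≤ C'.size := by
    cases b
    · exact (min_le_left _ _).trans (Nat.sInf_le ⟨C', fun y => by rw [h3]; simp, rfl⟩)
    · exact (min_le_right _ _).trans (Nat.sInf_le ⟨C', fun y => by rw [h3]; simp, rfl⟩)
  have h5 : CC (m + 1) (XORf (m + 1)) = C.size := hs.symm
  omega
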